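/- arXiv:2602.15472 — 2 statements merged into one kernel-verified Lean document; each statement's English description precedes it below -/
import Mathlib

section
/- Let d ≥ 1 and ε > 0. The function f : ℝᵈ → ℝ defined by f(x) = exp(−ε‖x‖) · (3 + 3ε‖x‖ + (ε‖x‖)²), where ‖·‖ is the Euclidean norm, is four times continuously differentiable on all of ℝᵈ (i.e., f is of class C⁴, including at the origin). -/
/-!
Let `φ : ℝ → F` be of class `C^n` with vanishing odd derivatives at `0` up to order `n`. Its
Maclaurin polynomial then contains only even powers, so evaluated at `‖x‖` it is a polynomial in
`‖x‖ ^ 2`, which is smooth. It remains to treat the Maclaurin remainder `R`, and the statement that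
can be proved by induction on `n` is the following: if `R` is the remainder of order `n + j` and
`h` is homogeneous of degree `-j` and smooth away from the origin, then `h x • R ‖x‖` is of class
`C^n`. Indeed it is `o(‖x‖ ^ n)` at the origin, and differentiating it either replaces `φ` by `φ'`
(lowering the order of the remainder) or replaces `h` by its derivative (raising `j`); both
resulting terms are of the same form with `n - 1` in place of `n`.

For the Matérn profile, the first and third derivatives are `exp (-(ε * r))` times a polynomial
without constant term, so they vanish at `0`.
-/

open Asymptotics Set Topology
open scoped ContDiff

section MaclaurinRemainder

variable {F : Type*} [NormedAddCommGroup F] [NormedSpace ℝ F] {φ : ℝ → F} {n : ℕ}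

/-- The remainder `φ r - ∑ k ≤ n, r ^ k / k! • φ⁽ᵏ⁾(0)` of Taylor's formula at the origin:
the part of the profile `φ` for which smoothness of `φ ‖x‖` is in question. -/
noncomputable def maclaurinRemainder (φ : ℝ → F) (n : ℕ) (r : ℝ) : F :=
  φ r - taylorWithinEval φ n univ 0 r

@[simp]
theorem maclaurinRemainder_zero_right (φ : ℝ → F) (n : ℕ) : maclaurinRemainder φ n 0 = 0 := by
  simp [maclaurinRemainder]

theorem hasDerivAt_maclaurinRemainder_succ (hφ : Differentiable ℝ φ) (n : ℕ) (r : ℝ) :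
    HasDerivAt (maclaurinRemainder φ (n + 1)) (maclaurinRemainder (deriv φ) n r) r := by
  have hT := hasDerivAt_taylorWithinEval_succ (x₀ := 0) (x := r) (s := univ) φ n
  rw [derivWithin_univ] at hT
  exact (hφ r).hasDerivAt.sub hT

theorem continuous_maclaurinRemainder (hφ : Continuous φ) (n : ℕ) :
    Continuous (maclaurinRemainder φ n) := by
  unfold maclaurinRemainder
  simp only [taylor_within_apply]
  fun_prop

theorem maclaurinRemainder_isLittleO (hφ : ContDiff ℝ n φ) :
    maclaurinRemainder φ n =o[𝓝 0] fun r => r ^ n :=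
  (taylor_isLittleO_univ hφ).congr_right fun r => by rw [sub_zero]

end MaclaurinRemainder

/-- Real functions that are smooth away from the origin and positively homogeneous of degree `-j`,
the coefficients of the remainder terms in the induction. The homogeneity is stated without
division; the value `h 0` is unconstrained for `j = 0` and `0` otherwise. -/
structure IsNegHomogeneous {E : Type*} [NormedAddCommGroup E] [NormedSpace ℝ E]
    (h : E → ℝ) (j : ℕ) : Prop where
  contDiffOn : ContDiffOn ℝ ∞ h {0}ᶜ
  pow_mul_map_smul : ∀ ⦃t : ℝ⦄, 0 < t → ∀ x, t ^ j * h (t • x) = h x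

namespace IsNegHomogeneous

section NormedSpace

variable {E : Type*} [NormedAddCommGroup E] [NormedSpace ℝ E] {h h' : E → ℝ} {j k : ℕ}

theorem one : IsNegHomogeneous (1 : E → ℝ) 0 where
  contDiffOn := contDiffOn_const
  pow_mul_map_smul _ _ _ := by simp

theorem contDiffAt (hh : IsNegHomogeneous h j) {x : E} (hx : x ≠ 0) : ContDiffAt ℝ ∞ h x :=
  hh.contDiffOn.contDiffAt (isOpen_compl_singleton.mem_nhds hx)

theorem mul (hh : IsNegHomogeneous h j) (hh' : IsNegHomogeneous h' k) :
    IsNegHomogeneous (fun x => h x * h' x) (j + k) where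
  contDiffOn := hh.contDiffOn.mul hh'.contDiffOn
  pow_mul_map_smul t ht x := by
    rw [← hh.pow_mul_map_smul ht x, ← hh'.pow_mul_map_smul ht x]
    ring

theorem fderiv_apply (hh : IsNegHomogeneous h j) (v : E) :
    IsNegHomogeneous (fun x => fderiv ℝ h x v) (j + 1) where
  contDiffOn :=
    (hh.contDiffOn.fderiv_of_isOpen isOpen_compl_singleton (by simp)).clm_apply contDiffOn_const
  pow_mul_map_smul t ht x := by
    have hscale : t ^ j • (fun x => h (t • x)) = h := funext (hh.pow_mul_map_smul ht)
    calc t ^ (j + 1) * fderiv ℝ h (t • x) v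
        = (t ^ j • t • fderiv ℝ h (t • x)) v := by simp [pow_succ, mul_assoc]
      _ = fderiv ℝ (t ^ j • fun x => h (t • x)) x v := by
        rw [← fderiv_comp_smul, fderiv_const_smul_field, Pi.smul_apply]
      _ = fderiv ℝ h x v := by rw [hscale]

theorem isBigO_inv_norm_pow [FiniteDimensional ℝ E] (hh : IsNegHomogeneous h j) :
    h =O[𝓝[≠] 0] fun x => (‖x‖ ^ j)⁻¹ := by
  have hsphere : Metric.sphere (0 : E) 1 ⊆ {0}ᶜ := fun y hy =>
    ne_zero_of_mem_unit_sphere ⟨y, hy⟩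
  obtain ⟨C, hC⟩ := (isCompact_sphere (0 : E) 1).exists_bound_of_continuousOn
    (hh.contDiffOn.continuousOn.mono hsphere)
  refine .of_bound C (eventually_mem_nhdsWithin.mono fun x hx => ?_)
  have hr : 0 < ‖x‖ := norm_pos_iff.2 hx
  have hscale : h x = (‖x‖ ^ j)⁻¹ * h (‖x‖⁻¹ • x) := by
    rw [← hh.pow_mul_map_smul hr (‖x‖⁻¹ • x), smul_inv_smul₀ hr.ne',
      inv_mul_cancel_left₀ (pow_pos hr j).ne']
  rw [hscale, norm_mul, mul_comm]
  gcongr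
  exact hC _ (by simp [norm_smul, hr.ne'])

end NormedSpace

variable {E : Type*} [NormedAddCommGroup E] [InnerProductSpace ℝ E]
  {F : Type*} [NormedAddCommGroup F] [NormedSpace ℝ F] {h : E → ℝ} {φ : ℝ → F} {n j : ℕ}

theorem fderiv_norm_apply (v : E) : IsNegHomogeneous (fun x : E => fderiv ℝ (‖·‖) x v) 0 where
  contDiffOn := by
    have hnorm : ContDiffOn ℝ ∞ (fun x : E => ‖x‖) {0}ᶜ := fun x hx =>
      (contDiffAt_norm ℝ hx).contDiffWithinAt
    exact (hnorm.fderiv_of_isOpen isOpen_compl_singleton (by simp)).clm_apply contDiffOn_const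
  pow_mul_map_smul t ht x := by simp [fderiv_norm_smul_pos ht]

variable [FiniteDimensional ℝ E]

theorem smul_maclaurinRemainder_norm_isLittleO (hh : IsNegHomogeneous h j)
    (hφ : ContDiff ℝ (n + j : ℕ) φ) :
    (fun x => h x • maclaurinRemainder φ (n + j) ‖x‖) =o[𝓝 0] fun x => ‖x‖ ^ n := by
  have hR : (fun x : E => maclaurinRemainder φ (n + j) ‖x‖) =o[𝓝[≠] 0] fun x => ‖x‖ ^ (n + j) :=
    (maclaurinRemainder_isLittleO hφ).comp_tendsto (tendsto_norm_zero.mono_left nhdsWithin_le_nhds)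
  have hpunctured : (fun x => h x • maclaurinRemainder φ (n + j) ‖x‖) =o[𝓝[≠] 0]
      fun x => ‖x‖ ^ n := by
    refine (hh.isBigO_inv_norm_pow.smul_isLittleO hR).congr' .rfl
      (eventually_mem_nhdsWithin.mono fun x hx => ?_)
    have hr : ‖x‖ ≠ 0 := norm_ne_zero_iff.2 hx
    simp only [smul_eq_mul]
    field_simp
    ring
  simpa only [insert_eq, union_compl_self, nhdsWithin_univ] using hpunctured.insert (by simp)

theorem continuous_smul_maclaurinRemainder_norm (hh : IsNegHomogeneous h j)
    (hφ : ContDiff ℝ j φ) : Continuous fun x => h x • maclaurinRemainder φ j ‖x‖ := by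
  refine continuous_iff_continuousAt.2 fun x => ?_
  rcases eq_or_ne x 0 with rfl | hx
  · have hlittle := hh.smul_maclaurinRemainder_norm_isLittleO (n := 0) (by simpa using hφ)
    simpa [ContinuousAt, isLittleO_one_iff] using hlittle
  · exact (hh.contDiffAt hx).continuousAt.smul
      ((continuous_maclaurinRemainder hφ.continuous j).comp continuous_norm).continuousAt

theorem hasFDerivAt_smul_maclaurinRemainder_norm (hh : IsNegHomogeneous h j)
    (hφ : ContDiff ℝ (n + j + 1 : ℕ) φ) (x : E) :
    HasFDerivAt (fun x => h x • maclaurinRemainder φ (n + j + 1) ‖x‖)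
      (h x • (fderiv ℝ (‖·‖) x).smulRight (maclaurinRemainder (deriv φ) (n + j) ‖x‖) +
        (fderiv ℝ h x).smulRight (maclaurinRemainder φ (n + j + 1) ‖x‖)) x := by
  rcases eq_or_ne x 0 with rfl | hx
  · have hlittle : (fun x => h x • maclaurinRemainder φ (n + j + 1) ‖x‖) =o[𝓝 0]
        fun x => ‖x‖ ^ (n + 1) := by
      rw [add_right_comm] at hφ ⊢
      exact hh.smul_maclaurinRemainder_norm_isLittleO hφ
    refine .of_isLittleO ?_
    have hlinear : (fun x : E => ‖x‖ ^ (n + 1)) =O[𝓝 0] fun x => x := by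
      refine isBigO_norm_right.1 ?_
      simpa [pow_succ'] using (isBigO_refl (fun x : E => ‖x‖) (𝓝 0)).mul
        ((continuous_norm.pow n).continuousAt.isBigO_one ℝ)
    simpa using hlittle.trans_isBigO hlinear
  · have hR := hasDerivAt_maclaurinRemainder_succ (hφ.differentiable (by simp)) (n + j) ‖x‖
    have hnorm : HasFDerivAt (‖·‖) (fderiv ℝ (‖·‖) x) x :=
      ((contDiffAt_norm ℝ hx (n := 1)).differentiableAt one_ne_zero).hasFDerivAt
    have hRnorm : HasFDerivAt (fun x => maclaurinRemainder φ (n + j + 1) ‖x‖)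
        ((fderiv ℝ (‖·‖) x).smulRight (maclaurinRemainder (deriv φ) (n + j) ‖x‖)) x :=
      (hR.hasFDerivAt.comp x hnorm).congr_fderiv (by ext; simp)
    exact ((hh.contDiffAt hx).differentiableAt (by simp)).hasFDerivAt.smul hRnorm

theorem contDiff_smul_maclaurinRemainder_norm (hh : IsNegHomogeneous h j)
    (hφ : ContDiff ℝ (n + j : ℕ) φ) :
    ContDiff ℝ n fun x => h x • maclaurinRemainder φ (n + j) ‖x‖ := by
  induction n generalizing h φ j with
  | zero =>
    rw [zero_add] at hφ ⊢
    exact contDiff_zero.2 (hh.continuous_smul_maclaurinRemainder_norm hφ)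
  | succ n ih =>
    rw [add_right_comm] at hφ ⊢
    have hderiv := hh.hasFDerivAt_smul_maclaurinRemainder_norm hφ
    have hφ' : ContDiff ℝ (n + j : ℕ) (deriv φ) := (contDiff_succ_iff_deriv.1 hφ).2.2
    rw [Nat.cast_succ, contDiff_succ_iff_fderiv_apply]
    refine ⟨fun x => (hderiv x).differentiableAt, by simp, fun v => ?_⟩
    have hsum := (ih (j := j) (hh.mul (fderiv_norm_apply v)) hφ').add (ih (hh.fderiv_apply v) hφ)
    convert hsum using 2 with x
    rw [(hderiv x).fderiv, mul_smul]
    rfl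

end IsNegHomogeneous

section Radial

variable {E : Type*} [NormedAddCommGroup E] [InnerProductSpace ℝ E]
  {F : Type*} [NormedAddCommGroup F] [NormedSpace ℝ F] {φ : ℝ → F} {n : ℕ}

theorem contDiff_taylorWithinEval_norm
    (hodd : ∀ k ≤ n, Odd k → iteratedDeriv k φ 0 = 0) :
    ContDiff ℝ ∞ fun x : E => taylorWithinEval φ n univ 0 ‖x‖ := by
  simp only [taylor_within_apply, sub_zero, iteratedDerivWithin_univ]
  refine ContDiff.sum fun k hk => ?_
  rcases k.even_or_odd with ⟨m, rfl⟩ | hk_odd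
  · simp only [← two_mul, pow_mul]
    exact (contDiff_const.mul ((contDiff_norm_sq ℝ).pow m)).smul contDiff_const
  · simp only [hodd k (Finset.mem_range_succ_iff.1 hk) hk_odd, smul_zero]
    exact contDiff_const

theorem contDiff_comp_norm_of_odd_iteratedDeriv_eq_zero [FiniteDimensional ℝ E]
    (hφ : ContDiff ℝ n φ) (hodd : ∀ k ≤ n, Odd k → iteratedDeriv k φ 0 = 0) :
    ContDiff ℝ n fun x : E => φ ‖x‖ := by
  have hT : ContDiff ℝ n fun x : E => taylorWithinEval φ n univ 0 ‖x‖ :=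
    (contDiff_taylorWithinEval_norm hodd).of_le (mod_cast le_top)
  have hR : ContDiff ℝ n fun x : E => maclaurinRemainder φ n ‖x‖ := by
    simpa using IsNegHomogeneous.one.contDiff_smul_maclaurinRemainder_norm (E := E) (j := 0) hφ
  simpa [maclaurinRemainder] using hT.add hR

end Radial

section Matern

variable (ε a b c : ℝ)

/-- The product of an exponential and a quadratic polynomial; the radial profile of the
`C⁴` Matérn kernel is the case `a = 3`, `b = 3 * ε`, `c = ε ^ 2`. -/
noncomputable def expMulQuadratic (r : ℝ) : ℝ :=
  Real.exp (-(ε * r)) * (a + b * r + c * r ^ 2)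

theorem contDiff_expMulQuadratic {n : WithTop ℕ∞} : ContDiff ℝ n (expMulQuadratic ε a b c) := by
  unfold expMulQuadratic
  fun_prop

theorem expMulQuadratic_zero_right : expMulQuadratic ε a b c 0 = a := by
  simp [expMulQuadratic]

theorem deriv_expMulQuadratic :
    deriv (expMulQuadratic ε a b c) =
      expMulQuadratic ε (b - ε * a) (2 * c - ε * b) (-(ε * c)) := by
  funext r
  have hexp : HasDerivAt (fun r => Real.exp (-(ε * r))) (Real.exp (-(ε * r)) * -ε) r := by
    simpa using ((hasDerivAt_id r).const_mul ε).fun_neg.exp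
  have hquad : HasDerivAt (fun r => a + b * r + c * r ^ 2) (b + c * (2 * r)) r := by
    simpa using (((hasDerivAt_id r).const_mul b).const_add a).fun_add
      ((hasDerivAt_pow 2 r).const_mul c)
  refine (hexp.mul hquad).deriv.trans ?_
  rw [expMulQuadratic]
  ring

end Matern

theorem matern_C4_smooth_general {E : Type*} [NormedAddCommGroup E] [InnerProductSpace ℝ E]
    [FiniteDimensional ℝ E] (ε : ℝ) :
    ContDiff ℝ 4 (fun x : E =>
      Real.exp (-(ε * ‖x‖)) * (3 + 3 * (ε * ‖x‖) + (ε * ‖x‖) ^ 2)) := by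
  have hprofile (r : ℝ) : Real.exp (-(ε * r)) * (3 + 3 * (ε * r) + (ε * r) ^ 2) =
      expMulQuadratic ε 3 (3 * ε) (ε ^ 2) r := by
    rw [expMulQuadratic]
    ring
  simp only [hprofile]
  refine contDiff_comp_norm_of_odd_iteratedDeriv_eq_zero (n := 4)
    (contDiff_expMulQuadratic _ _ _ _) fun k hk hk_odd => ?_
  obtain rfl | rfl : k = 1 ∨ k = 3 := by grind
  all_goals
    simp only [iteratedDeriv_succ', iteratedDeriv_zero, deriv_expMulQuadratic,
      expMulQuadratic_zero_right]
    ring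

/-- The `C⁴` Matérn kernel profile `x ↦ e^{−ε‖x‖}(3 + 3ε‖x‖ + (ε‖x‖)²)`,
with `‖·‖` the Euclidean norm on `ℝᵈ`, is four times continuously differentiable
on all of `ℝᵈ` (including at the origin). -/
theorem matern_C4_smooth (d : ℕ) (hd : 1 ≤ d) (ε : ℝ) (hε : 0 < ε) :
    ContDiff ℝ 4 (fun x : EuclideanSpace ℝ (Fin d) =>
      Real.exp (-(ε * ‖x‖)) * (3 + 3 * (ε * ‖x‖) + (ε * ‖x‖) ^ 2)) := by
  exact matern_C4_smooth_general ε
end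

section
/- Let c = (c₁, c₂) ∈ ℝ², α > 0, and for x ∈ ℝ² with x ≠ c set r = ‖x − c‖₂ and define the velocity field u(x) = (u₁(x), u₂(x)) by u₁(x) = −(x₂ − c₂) · 4e^{−r^α} and u₂(x) = (x₁ − c₁) · 4e^{−r^α}. Then for all x ≠ c: (i) the field is divergence-free, ∂₁u₁(x) + ∂₂u₂(x) = 0; and (ii) its scalar vorticity is ∂₁u₂(x) − ∂₂u₁(x) = (8 − 4α r^α) e^{−r^α}. -/
/-- Partial derivative of `f : ℝ² → ℝ` (Euclidean) in the `i`-th coordinate direction. -/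
noncomputable def pdE (i : Fin 2) (f : EuclideanSpace ℝ (Fin 2) → ℝ)
    (x : EuclideanSpace ℝ (Fin 2)) : ℝ :=
  fderiv ℝ f x (EuclideanSpace.single i 1)

/-!
With `r = ‖x - c‖`, the field is a rotation about `c` with angular velocity `Ω(r) = 4e^{-r^α}`.
Rigid rotation is divergence-free, and since `∇r = (x - c) / r` the gradient of `Ω(r)` is radial,
hence orthogonal to the velocity; so the divergence vanishes. The vorticity of such a rotation is
`2Ω + rΩ'`, and here `rΩ' = -4α r^α e^{-r^α}`.
-/

section Radial

variable {E : Type*} [NormedAddCommGroup E] [InnerProductSpace ℝ E] {c x : E}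

theorem hasFDerivAt_norm_of_ne_zero (hx : x ≠ 0) :
    HasFDerivAt (fun y : E => ‖y‖) (‖x‖⁻¹ • innerSL ℝ x) x := by
  have hsq : ‖x‖ ^ 2 ≠ 0 := pow_ne_zero 2 (norm_ne_zero_iff.mpr hx)
  have hsqrt := (hasStrictFDerivAt_norm_sq x).hasFDerivAt.sqrt hsq
  simp only [Real.sqrt_sq (norm_nonneg _)] at hsqrt
  convert! hsqrt using 1
  module

theorem hasFDerivAt_comp_norm_sub {g : ℝ → ℝ} {g' : ℝ}
    (hg : HasDerivAt g g' ‖x - c‖) (hx : x ≠ c) :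
    HasFDerivAt (fun y => g ‖y - c‖) (g' • ‖x - c‖⁻¹ • innerSL ℝ (x - c)) x := by
  have hnorm : HasFDerivAt (fun y => ‖y - c‖) (‖x - c‖⁻¹ • innerSL ℝ (x - c)) x :=
    (hasFDerivAt_comp_sub c).mpr (hasFDerivAt_norm_of_ne_zero (sub_ne_zero.mpr hx))
  exact hg.comp_hasFDerivAt x hnorm

end Radial

section PartialDerivatives

variable {f : EuclideanSpace ℝ (Fin 2) → ℝ} {x : EuclideanSpace ℝ (Fin 2)}

theorem pdE_neg (i : Fin 2) : pdE i (fun y => -f y) x = -pdE i f x := by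
  simp [pdE]

theorem pdE_coord_sub_mul (i j : Fin 2) (a : ℝ) (hf : DifferentiableAt ℝ f x) :
    pdE i (fun y => (y j - a) * f y) x
      = (x j - a) * pdE i f x + (if j = i then f x else 0) := by
  have hcoord : HasFDerivAt (fun y : EuclideanSpace ℝ (Fin 2) => y j - a)
      (EuclideanSpace.proj j : EuclideanSpace ℝ (Fin 2) →L[ℝ] ℝ) x :=
    (EuclideanSpace.proj j : EuclideanSpace ℝ (Fin 2) →L[ℝ] ℝ).hasFDerivAt.sub_const a
  simp [pdE, (hcoord.fun_mul hf.hasFDerivAt).fderiv]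

end PartialDerivatives

section Rotation

variable {Ω : ℝ → ℝ} {Ω' : ℝ} {c x : EuclideanSpace ℝ (Fin 2)}

theorem pdE_comp_norm_sub (i : Fin 2) (hΩ : HasDerivAt Ω Ω' ‖x - c‖) (hx : x ≠ c) :
    pdE i (fun y => Ω ‖y - c‖) x = Ω' * ((x i - c i) / ‖x - c‖) := by
  simp [pdE, (hasFDerivAt_comp_norm_sub hΩ hx).fderiv, EuclideanSpace.inner_single_right,
    div_eq_inv_mul]

theorem divergence_rotation (hΩ : DifferentiableAt ℝ Ω ‖x - c‖) (hx : x ≠ c) :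
    pdE 0 (fun y => -(y 1 - c 1) * Ω ‖y - c‖) x
      + pdE 1 (fun y => (y 0 - c 0) * Ω ‖y - c‖) x = 0 := by
  have hdiff := (hasFDerivAt_comp_norm_sub hΩ.hasDerivAt hx).differentiableAt
  simp only [neg_mul, pdE_neg, pdE_coord_sub_mul _ _ _ hdiff, pdE_comp_norm_sub _ hΩ.hasDerivAt hx,
    one_ne_zero, zero_ne_one, if_false]
  ring

theorem vorticity_rotation (hΩ : HasDerivAt Ω Ω' ‖x - c‖) (hx : x ≠ c) :
    pdE 0 (fun y => (y 0 - c 0) * Ω ‖y - c‖) x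
      - pdE 1 (fun y => -(y 1 - c 1) * Ω ‖y - c‖) x = 2 * Ω ‖x - c‖ + ‖x - c‖ * Ω' := by
  have hdiff := (hasFDerivAt_comp_norm_sub hΩ hx).differentiableAt
  have hnorm : ‖x - c‖ ^ 2 = (x 0 - c 0) ^ 2 + (x 1 - c 1) ^ 2 := by
    simp [EuclideanSpace.real_norm_sq_eq, Fin.sum_univ_two]
  simp only [neg_mul, pdE_neg, pdE_coord_sub_mul _ _ _ hdiff, pdE_comp_norm_sub _ hΩ hx, if_true]
  calc (x 0 - c 0) * (Ω' * ((x 0 - c 0) / ‖x - c‖)) + Ω ‖x - c‖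
        - -((x 1 - c 1) * (Ω' * ((x 1 - c 1) / ‖x - c‖)) + Ω ‖x - c‖)
      = 2 * Ω ‖x - c‖ + ((x 0 - c 0) ^ 2 + (x 1 - c 1) ^ 2) / ‖x - c‖ * Ω' := by ring
    _ = 2 * Ω ‖x - c‖ + ‖x - c‖ * Ω' := by rw [← hnorm, sq, mul_self_div_self]

end Rotation

theorem hasDerivAt_exp_neg_rpow (α : ℝ) {r : ℝ} (hr : r ≠ 0) :
    HasDerivAt (fun s : ℝ => Real.exp (-(s ^ α)))
      (Real.exp (-(r ^ α)) * -(α * r ^ (α - 1))) r :=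
  (Real.hasDerivAt_rpow_const (Or.inl hr)).neg.exp

theorem vortex_divfree_and_vorticity_general
    (c : EuclideanSpace ℝ (Fin 2)) (α : ℝ)
    (u1 u2 : EuclideanSpace ℝ (Fin 2) → ℝ)
    (hu1 : ∀ x, u1 x = -(x 1 - c 1) * (4 * Real.exp (-(‖x - c‖ ^ α))))
    (hu2 : ∀ x, u2 x = (x 0 - c 0) * (4 * Real.exp (-(‖x - c‖ ^ α))))
    (x : EuclideanSpace ℝ (Fin 2)) (hx : x ≠ c) :
    pdE 0 u1 x + pdE 1 u2 x = 0 ∧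
    pdE 0 u2 x - pdE 1 u1 x
      = (8 - 4 * α * ‖x - c‖ ^ α) * Real.exp (-(‖x - c‖ ^ α)) := by
  have hr : ‖x - c‖ ≠ 0 := norm_ne_zero_iff.mpr (sub_ne_zero.mpr hx)
  have hΩ := (hasDerivAt_exp_neg_rpow α hr).const_mul 4
  rw [funext hu1, funext hu2]
  refine ⟨divergence_rotation hΩ.differentiableAt hx, (vorticity_rotation hΩ hx).trans ?_⟩
  rw [Real.rpow_sub_one hr]
  field_simp
  ring

/-- The planar vortex field `u₁ = −(x₂−c₂)·4e^{−r^α}`, `u₂ = (x₁−c₁)·4e^{−r^α}`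
with `r = ‖x−c‖₂` is divergence-free away from the center, and its scalar vorticity
is `∂₁u₂ − ∂₂u₁ = (8 − 4α r^α) e^{−r^α}`. -/
theorem vortex_divfree_and_vorticity
    (c : EuclideanSpace ℝ (Fin 2)) (α : ℝ) (hα : 0 < α)
    (u1 u2 : EuclideanSpace ℝ (Fin 2) → ℝ)
    (hu1 : ∀ x, u1 x = -(x 1 - c 1) * (4 * Real.exp (-(‖x - c‖ ^ α))))
    (hu2 : ∀ x, u2 x = (x 0 - c 0) * (4 * Real.exp (-(‖x - c‖ ^ α))))
    (x : EuclideanSpace ℝ (Fin 2)) (hx : x ≠ c) :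
    pdE 0 u1 x + pdE 1 u2 x = 0 ∧
    pdE 0 u2 x - pdE 1 u1 x
      = (8 - 4 * α * ‖x - c‖ ^ α) * Real.exp (-(‖x - c‖ ^ α)) :=
  vortex_divfree_and_vorticity_general c α u1 u2 hu1 hu2 x hx
end
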